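/- Let m_1,…,m_n ∈ ℕ^d, let s_1,…,s_n ∈ ℕ, set m = s_1m_1 + ⋯ + s_nm_n and δ = s_1 + ⋯ + s_n, and let ℓ be a positive integer with ℓ ≥ δ such that gcd(ℓ, m_j) = 1 for some component m_j of m. If the projective toric variety defined by I_{S̄} is a set-theoretic complete intersection on homogeneous polynomials f_1,…,f_r ∈ K[x_0,…,x_n], i.e. the radical of I_{S̄} equals the radical of ⟨f_1,…,f_r⟩, then the radical of I_{S̄_{ℓ,m}} equals the radical of the ideal of K[x_0,…,x_{n+1}] generated by ῑ(f_1),…,ῑ(f_r) and F = x_{n+1}^ℓ − x_0^{ℓ−δ}x_1^{s_1}⋯x_n^{s_n}. -/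

import Mathlib

open MvPolynomial

theorem aux_indep {K : Type*} [Field K] {σ : Type*} (ℓ : ℕ) (hℓ : 0 < ℓ) (w : σ →₀ ℕ) (j : σ)
    (hj : Nat.gcd ℓ (w j) = 1) (h : ℕ → MvPolynomial σ K)
    (hs : ∑ k ∈ Finset.range ℓ, expand ℓ (h k) * (monomial w (1 : K)) ^ k = 0) :
    ∀ k < ℓ, h k = 0 := by
  intro k0 hk0
  ext e
  have h1 := congrArg (coeff (ℓ • e + k0 • w)) hs
  rw [coeff_sum, coeff_zero, Finset.sum_eq_single k0] at h1
  · rw [monomial_pow, coeff_mul_monomial', if_pos (by simp)] at h1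
    simpa [coeff_expand_smul ℓ hℓ.ne'] using h1
  · intro k hk hne
    rw [monomial_pow, coeff_mul_monomial']
    split_ifs with hle
    · rw [coeff_expand_of_not_dvd (i := j), zero_mul]
      intro hdvd
      have hle' := hle j
      simp only [Finsupp.coe_tsub, Finsupp.coe_add, Finsupp.coe_smul, Pi.sub_apply, Pi.add_apply,
        Pi.smul_apply, smul_eq_mul] at hdvd hle'
      have h2 : (k * w j) ≡ (ℓ * e j + k0 * w j) [MOD ℓ] :=
        (Nat.modEq_iff_dvd' hle').2 hdvd
      have h3 : (k * w j) ≡ (k0 * w j) [MOD ℓ] := by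
        refine h2.trans ?_
        simp [Nat.ModEq]
      have h4 := Nat.ModEq.cancel_right_of_coprime hj h3
      have h5 := Nat.ModEq.eq_of_lt_of_lt h4 (Finset.mem_range.1 hk) hk0
      exact hne h5
    · rfl
  · intro hn
    exact absurd (Finset.mem_range.2 hk0) hn

theorem aux_reduce {K : Type*} [Field K] (n ℓ : ℕ) (hℓ : 0 < ℓ) (M : MvPolynomial (Fin (n + 1)) K)
    (g : MvPolynomial (Fin (n + 2)) K) :
    ∃ (h : ℕ → MvPolynomial (Fin (n + 1)) K) (q : MvPolynomial (Fin (n + 2)) K),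
      g = ∑ k ∈ Finset.range ℓ, rename Fin.castSucc (h k) * X (Fin.last (n + 1)) ^ k +
        (X (Fin.last (n + 1)) ^ ℓ - rename Fin.castSucc M) * q := by
  let P : Polynomial (MvPolynomial (Fin (n + 1)) K) →+* MvPolynomial (Fin (n + 2)) K :=
    Polynomial.eval₂RingHom
      (rename (Fin.castSucc : Fin (n + 1) → Fin (n + 2)) :
        MvPolynomial (Fin (n + 1)) K →ₐ[K] MvPolynomial (Fin (n + 2)) K).toRingHom
      (X (Fin.last (n + 1)))
  have hsurj : ∀ g, ∃ p, P p = g := by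
    intro g
    induction g using MvPolynomial.induction_on with
    | C a => exact ⟨Polynomial.C (C a), by simp [P]⟩
    | add p q hp hq =>
      obtain ⟨p', rfl⟩ := hp
      obtain ⟨q', rfl⟩ := hq
      exact ⟨p' + q', map_add _ _ _⟩
    | mul_X p i hp =>
      obtain ⟨p', rfl⟩ := hp
      induction i using Fin.lastCases with
      | last => exact ⟨p' * Polynomial.X, by rw [map_mul]; simp [P]⟩
      | cast i => exact ⟨p' * Polynomial.C (X i), by rw [map_mul]; simp [P]⟩
  obtain ⟨p, rfl⟩ := hsurj g
  have hm := Polynomial.monic_X_pow_sub_C M hℓ.ne'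
  set Q : Polynomial (MvPolynomial (Fin (n + 1)) K) := Polynomial.X ^ ℓ - Polynomial.C M with hQ
  have hdeg : Q.natDegree = ℓ := Polynomial.natDegree_X_pow_sub_C
  have hlt : (p %ₘ Q).natDegree < ℓ := by
    have := Polynomial.natDegree_modByMonic_lt p hm (by
      intro h1
      rw [h1, Polynomial.natDegree_one] at hdeg
      omega)
    rwa [hdeg] at this
  refine ⟨fun k => (p %ₘ Q).coeff k, P (p /ₘ Q), ?_⟩
  have hPQ : P Q = X (Fin.last (n + 1)) ^ ℓ - rename Fin.castSucc M := by
    simp [P, hQ]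
  rw [← hPQ, ← map_mul]
  conv_lhs => rw [← Polynomial.modByMonic_add_div p Q, map_add]
  congr 1
  conv_lhs => rw [Polynomial.as_sum_range' _ ℓ hlt, map_sum]
  refine Finset.sum_congr rfl fun k _ => ?_
  simp [P, Polynomial.eval₂_monomial]

/-- If the projective toric variety defined by `I_{S̄}` is a
set-theoretic complete intersection on homogeneous polynomials `f_1,…,f_r`,
then for `ℓ ≥ δ = s_1 + ⋯ + s_n` coprime to some component of `m`,
`√(I_{S̄_{ℓ,m}}) = √⟨ῑ(f_1),…,ῑ(f_r),F⟩` with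
`F = x_{n+1}^ℓ − x_0^{ℓ−δ} x_1^{s_1}⋯x_n^{s_n}`. -/
theorem stmt_6 (K : Type*) [Field K] (d n r : ℕ)
    (m : Fin n → Fin d → ℕ) (s : Fin n → ℕ) (ℓ : ℕ) (hℓ : 0 < ℓ)
    (hδ : ∑ i, s i ≤ ℓ)
    (hgcd : ∃ j : Fin d, Nat.gcd ℓ (∑ i, s i * m i j) = 1)
    (φbar : MvPolynomial (Fin (n + 1)) K →ₐ[K] MvPolynomial (Fin (d + 1)) K)
    (hφbar : φbar = aeval fun i : Fin (n + 1) =>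
      Fin.cases (X (Fin.last d))
        (fun i' : Fin n =>
          X (Fin.last d) * ∏ j : Fin d, X j.castSucc ^ m i' j) i)
    (ψbar : MvPolynomial (Fin (n + 2)) K →ₐ[K] MvPolynomial (Fin (d + 1)) K)
    (hψbar : ψbar = aeval fun i : Fin (n + 2) =>
      Fin.cases (X (Fin.last d))
        (fun i' : Fin (n + 1) =>
          Fin.lastCases
            (X (Fin.last d) * ∏ j : Fin d, X j.castSucc ^ (∑ k, s k * m k j))
            (fun i'' : Fin n =>
              X (Fin.last d) * ∏ j : Fin d, X j.castSucc ^ (ℓ * m i'' j)) i') i)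
    (F : MvPolynomial (Fin (n + 2)) K)
    (hF : F = X (Fin.last (n + 1)) ^ ℓ -
      X (0 : Fin (n + 2)) ^ (ℓ - ∑ i, s i) *
        ∏ i : Fin n, X (i.succ.castSucc : Fin (n + 2)) ^ s i)
    (f : Fin r → MvPolynomial (Fin (n + 1)) K) (deg : Fin r → ℕ)
    (hhom : ∀ i, (f i).IsHomogeneous (deg i))
    (hsci : (RingHom.ker φbar).radical = (Ideal.span (Set.range f)).radical) :
    (RingHom.ker ψbar).radical =
      (Ideal.span (insert F
        (Set.range fun i : Fin r =>
          rename (Fin.castSucc : Fin (n + 1) → Fin (n + 2)) (f i)))).radical := by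
  classical
  obtain ⟨j, hj⟩ := hgcd
  let sig : MvPolynomial (Fin (d + 1)) K →ₐ[K] MvPolynomial (Fin (d + 1)) K :=
    aeval fun i => Fin.lastCases (X (Fin.last d)) (fun j : Fin d => X j.castSucc ^ ℓ) i
  let tau : MvPolynomial (Fin (d + 1)) K →ₐ[K] MvPolynomial (Fin (d + 1)) K :=
    aeval fun i => Fin.lastCases (X (Fin.last d) ^ ℓ) (fun j : Fin d => X j.castSucc) i
  have hψ0 : ψbar (X 0) = X (Fin.last d) := by simp [hψbar]
  have hψs : ∀ i : Fin n, ψbar (X i.succ.castSucc) =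
      X (Fin.last d) * ∏ j : Fin d, X j.castSucc ^ (ℓ * m i j) := by
    intro i
    rw [← Fin.succ_castSucc]
    simp [hψbar]
  have hψl : ψbar (X (Fin.last (n + 1))) =
      X (Fin.last d) * ∏ j : Fin d, X j.castSucc ^ (∑ k, s k * m k j) := by
    rw [← Fin.succ_last, hψbar, aeval_X, Fin.cases_succ, Fin.lastCases_last]
  have hsig : ∀ p, ψbar (rename Fin.castSucc p) = sig (φbar p) := by
    intro p
    have : ψbar.comp (rename Fin.castSucc) = sig.comp φbar := by
      ext1 i
      induction i using Fin.cases with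
      | zero => simp [hψ0, hφbar, sig]
      | succ i =>
        simp only [AlgHom.comp_apply, rename_X, hψs]
        simp [hφbar, sig, pow_mul]
    exact DFunLike.congr_fun this p
  have htau : ∀ p, tau (sig p) = expand ℓ p := by
    intro p
    have : tau.comp sig = expand ℓ := by
      ext1 i
      induction i using Fin.lastCases with
      | last => simp [sig, tau]
      | cast i => simp [sig, tau]
    exact DFunLike.congr_fun this p
  let w : Fin (d + 1) →₀ ℕ :=
    Finsupp.equivFunOnFinite.symm
      (fun i => Fin.lastCases ℓ (fun j : Fin d => ∑ k, s k * m k j) i)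
  have hw : tau (ψbar (X (Fin.last (n + 1)))) = monomial w (1 : K) := by
    rw [hψl, monomial_eq, Finsupp.prod_fintype _ _ (by simp), Fin.prod_univ_castSucc]
    simp [tau, w, mul_comm]
  let M : MvPolynomial (Fin (n + 1)) K := X 0 ^ (ℓ - ∑ i, s i) * ∏ i : Fin n, X i.succ ^ s i
  have hFM : F = X (Fin.last (n + 1)) ^ ℓ - rename Fin.castSucc M := by
    simp [hF, M]
  have hFker : ψbar F = 0 := by
    rw [hF, map_sub, map_mul, map_pow, map_pow, map_prod, hψl, hψ0]
    simp only [map_pow, hψs, mul_pow, Finset.prod_mul_distrib, Finset.prod_pow_eq_pow_sum]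
    rw [← mul_assoc, ← pow_add, Nat.sub_add_cancel hδ, sub_eq_zero]
    congr 1
    simp only [← Finset.prod_pow, ← pow_mul]
    rw [Finset.prod_comm]
    refine Finset.prod_congr rfl fun j _ => ?_
    rw [Finset.prod_pow_eq_pow_sum, Finset.sum_mul]
    congr 1
    exact Finset.sum_congr rfl fun i _ => by ring
  have hkerφ : (RingHom.ker φbar).IsRadical := (RingHom.ker_isPrime φbar).isRadical
  apply le_antisymm
  · rw [Ideal.radical_le_radical_iff]
    intro g hg
    rw [RingHom.mem_ker] at hg
    obtain ⟨h, q, hgq⟩ := aux_reduce n ℓ hℓ M g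
    rw [← hFM] at hgq
    have hz : ∀ k < ℓ, φbar (h k) = 0 := by
      refine aux_indep ℓ hℓ w j.castSucc (by simpa [w] using hj) (fun k => φbar (h k)) ?_
      have h1 := congrArg tau hg
      rw [hgq, map_add, map_mul, hFker, zero_mul, add_zero, map_zero, map_sum, map_sum] at h1
      rw [← h1]
      refine Finset.sum_congr rfl fun k _ => ?_
      rw [map_mul, map_mul, map_pow, map_pow, hw, hsig, htau]
    rw [hgq]
    refine Ideal.add_mem _ (Ideal.sum_mem _ fun k hk => Ideal.mul_mem_right _ _ ?_)
      (Ideal.mul_mem_right _ _ (Ideal.le_radical (Ideal.subset_span (Set.mem_insert _ _))))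
    have h2 : h k ∈ (Ideal.span (Set.range f)).radical := by
      rw [← hsci]
      exact Ideal.le_radical (hz k (Finset.mem_range.1 hk))
    obtain ⟨N, hN⟩ := h2
    refine ⟨N, ?_⟩
    rw [← map_pow]
    have h3 := Ideal.mem_map_of_mem
      (rename (R := K) (Fin.castSucc : Fin (n + 1) → Fin (n + 2))) hN
    rw [Ideal.map_span, ← Set.range_comp] at h3
    exact Ideal.span_mono (Set.subset_insert _ _) h3
  · rw [Ideal.radical_le_radical_iff, Ideal.span_le]
    rintro x (rfl | ⟨i, rfl⟩)
    · exact Ideal.le_radical hFker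
    · apply Ideal.le_radical
      have h1 : f i ∈ RingHom.ker φbar := by
        rw [← hkerφ.radical, hsci]
        exact Ideal.le_radical (Ideal.subset_span ⟨i, rfl⟩)
      rw [RingHom.mem_ker] at h1 ⊢
      rw [hsig, h1, map_zero]
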